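/- arXiv:2412.00817 — 2 statements merged into one kernel-verified Lean document; each statement's English description precedes it below -/
import Mathlib

section
/- Let Ω ⊂ ℝⁿ (n ≥ 3) be a smooth bounded open set and let (G_α) be functions on Ω × Ω (off the diagonal) satisfying for all α and all x ≠ y in Ω: 0 ≤ G_α(y,x) ≤ C₀ |y−x|^{2−n} min{1, d(y,∂Ω) d(x,∂Ω) / |y−x|²} for some constant C₀. Then for every open set U ⊂ Ω there exists a constant C(U), with C(U) → 0 as the Lebesgue measure |U| → 0, such that ∫_U G_α(y,x) dx ≤ C(U) d(y,∂Ω) for all y ∈ Ω and all α. -/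
open MeasureTheory Filter Topology Metric
open scoped RealInnerProductSpace

noncomputable section

/-- Euclidean space ℝⁿ. -/
abbrev En (n : ℕ) := EuclideanSpace ℝ (Fin n)

/-- The Laplacian of `f` at `x`, computed as the sum of the second partial derivatives
in the coordinate directions. -/
def lap {n : ℕ} (f : En n → ℝ) (x : En n) : ℝ :=
  ∑ i : Fin n, fderiv ℝ (fun y => fderiv ℝ f y (EuclideanSpace.single i 1)) x
    (EuclideanSpace.single i 1)

/-- The critical Sobolev exponent `2* = 2n/(n-2)`. -/
def twoStar (n : ℕ) : ℝ := 2 * n / (n - 2)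

/-- Smooth compactly supported test functions in `Ω` (a dense subspace of `H¹₀(Ω)`). -/
def TestFun {n : ℕ} (Ω : Set (En n)) (v : En n → ℝ) : Prop :=
  ContDiff ℝ (⊤ : ℕ∞) v ∧ HasCompactSupport v ∧ tsupport v ⊆ Ω

/-- The quadratic form `∫_Ω (|∇v|² + h v²) dx` of the operator `-Δ + h`. -/
def energy {n : ℕ} (Ω : Set (En n)) (h v : En n → ℝ) : ℝ :=
  ∫ x in Ω, (‖fderiv ℝ v x‖ ^ 2 + h x * v x ^ 2)

/-- Coercivity of `-Δ + h` on `H¹₀(Ω)`. -/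
def Coercive {n : ℕ} (Ω : Set (En n)) (h : En n → ℝ) : Prop :=
  ∃ C > 0, ∀ v, TestFun Ω v → C * ∫ x in Ω, ‖fderiv ℝ v x‖ ^ 2 ≤ energy Ω h v

/-- The Rayleigh–Sobolev quotient associated with `-Δ + h` on `Ω`. -/
def rayleigh {n : ℕ} (Ω : Set (En n)) (h v : En n → ℝ) : ℝ :=
  energy Ω h v / (∫ x in Ω, |v x| ^ twoStar n) ^ (2 / twoStar n)

/-- `I_h(Ω)`: the infimum of the Rayleigh–Sobolev quotient over nonzero functions. -/
def Ih {n : ℕ} (Ω : Set (En n)) (h : En n → ℝ) : ℝ :=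
  sInf (rayleigh Ω h '' {v | TestFun Ω v ∧ v ≠ 0})

/-- `K_n^{-2}`: the best constant in the Sobolev inequality on `ℝⁿ`. -/
def KnInvSq (n : ℕ) : ℝ :=
  sInf ((fun v : En n → ℝ =>
      (∫ x, ‖fderiv ℝ v x‖ ^ 2) / (∫ x, |v x| ^ twoStar n) ^ (2 / twoStar n)) ''
    {v : En n → ℝ | ContDiff ℝ (⊤ : ℕ∞) v ∧ HasCompactSupport v ∧ v ≠ 0})

/-- `v` is a (classical) solution of `-Δv + h v = |v|^{2*-2} v` in `Ω`, `v = 0` on `∂Ω`. -/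
def IsSolution {n : ℕ} (Ω : Set (En n)) (h v : En n → ℝ) : Prop :=
  ContDiffOn ℝ 2 v (closure Ω) ∧
  (∀ x ∈ Ω, -lap v x + h x * v x = |v x| ^ (twoStar n - 2) * v x) ∧
  ∀ x ∈ frontier Ω, v x = 0

/-- `v` changes sign in `Ω`: both its positive and negative parts are nonzero. -/
def SignChanging {n : ℕ} (Ω : Set (En n)) (v : En n → ℝ) : Prop :=
  (∃ x ∈ Ω, 0 < v x) ∧ ∃ x ∈ Ω, v x < 0

/-- The sup norm of `v` on `Ω̄`. -/
def supNorm {n : ℕ} (Ω : Set (En n)) (v : En n → ℝ) : ℝ :=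
  ⨆ x ∈ closure Ω, |v x|

/-- Convergence in `C⁰(s)`: uniform convergence on `s`. -/
def TendstoC0On {n : ℕ} (v : ℕ → En n → ℝ) (w : En n → ℝ) (s : Set (En n)) : Prop :=
  TendstoUniformlyOn (fun α x => v α x) w atTop s

/-- Convergence in `C¹(s)`. -/
def TendstoC1On {n : ℕ} (v : ℕ → En n → ℝ) (w : En n → ℝ) (s : Set (En n)) : Prop :=
  TendstoUniformlyOn (fun α x => v α x) w atTop s ∧
  TendstoUniformlyOn (fun α x => fderiv ℝ (v α) x) (fderiv ℝ w) atTop s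

/-- Convergence in `C²(s)`. -/
def TendstoC2On {n : ℕ} (v : ℕ → En n → ℝ) (w : En n → ℝ) (s : Set (En n)) : Prop :=
  TendstoUniformlyOn (fun α x => v α x) w atTop s ∧
  TendstoUniformlyOn (fun α x => fderiv ℝ (v α) x) (fderiv ℝ w) atTop s ∧
  TendstoUniformlyOn (fun α x => iteratedFDeriv ℝ 2 (v α) x) (iteratedFDeriv ℝ 2 w) atTop s

/-- Convergence in `C²_loc` on the region `s`: `C²` convergence on every compact subset. -/
def TendstoC2Loc {n : ℕ} (v : ℕ → En n → ℝ) (w : En n → ℝ) (s : Set (En n)) : Prop :=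
  ∀ K, K ⊆ s → IsCompact K → TendstoC2On v w K

/-- The standard bubble `B₀(x) = (1 + |x|²/(n(n-2)))^{-(n-2)/2}`. -/
def B0 (n : ℕ) (x : En n) : ℝ :=
  (1 + ‖x‖ ^ 2 / ((n : ℝ) * ((n : ℝ) - 2))) ^ (-(((n : ℝ) - 2) / 2))

/-- The rescaled bubble `B_α` centered at `x0` with concentration scale `μ`. -/
def bubble (n : ℕ) (μ : ℝ) (x0 : En n) (x : En n) : ℝ :=
  μ ^ (-(((n : ℝ) - 2) / 2)) * B0 n (μ⁻¹ • (x - x0))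

/-- `w = ΠB`: `w` solves `(-Δ + h) w = B^{2*-1}` in `Ω` with zero boundary values. -/
def IsBubbleProj {n : ℕ} (Ω : Set (En n)) (h : En n → ℝ) (μ : ℝ) (x0 : En n)
    (w : En n → ℝ) : Prop :=
  ContDiffOn ℝ 2 w (closure Ω) ∧
  (∀ x ∈ Ω, -lap w x + h x * w x = bubble n μ x0 x ^ (twoStar n - 1)) ∧
  ∀ x ∈ frontier Ω, w x = 0

/-- Weak `H¹₀(Ω)` convergence, tested against gradients of smooth test functions. -/
def WeakH10Tendsto {n : ℕ} (Ω : Set (En n)) (v : ℕ → En n → ℝ) (w : En n → ℝ) : Prop :=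
  ∀ ψ, TestFun Ω ψ →
    Tendsto (fun α => ∫ x in Ω, ⟪gradient (v α) x, gradient ψ x⟫)
      atTop (𝓝 (∫ x in Ω, ⟪gradient w x, gradient ψ x⟫))

/-- Strong `H¹₀(Ω)` convergence. -/
def StrongH10Tendsto {n : ℕ} (Ω : Set (En n)) (v : ℕ → En n → ℝ) (w : En n → ℝ) : Prop :=
  Tendsto (fun α => ∫ x in Ω, ‖gradient (v α) x - gradient w x‖ ^ 2) atTop (𝓝 0)

/-- The truncated singular kernel `1_{B(0,R)} |z|^{1-n}`. -/
def kerR (n : ℕ) (R : ℝ) : En n → ENNReal :=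
  (ball (0 : En n) R).indicator fun z => ENNReal.ofReal (‖z‖ ^ ((1 : ℝ) - n))

/-- The sup over `y` of the potentials of the kernel over `U`. -/
def potSup (n : ℕ) (R : ℝ) (U : Set (En n)) : ENNReal :=
  ⨆ y : En n, ∫⁻ x in U, kerR n R (x - y)

lemma kerR_integrable (n : ℕ) (hn : 3 ≤ n) (R : ℝ) :
    IntegrableOn (fun z : En n => ‖z‖ ^ ((1 : ℝ) - n)) (ball (0 : En n) R) := by
  refine integrableOn_ball_of_norm_le_rpow (C := 1) (α := (n : ℝ) - 1) ?_ ?_ ?_ ?_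
  · simp; omega
  · simp
  · refine Eventually.of_forall fun x => ?_
    rw [one_mul, Real.norm_of_nonneg (by positivity), neg_sub]
  · exact (measurable_norm.pow_const _).aestronglyMeasurable

lemma kerR_lintegral_ne_top (n : ℕ) (hn : 3 ≤ n) (R : ℝ) : ∫⁻ z, kerR n R z ≠ ⊤ := by
  unfold kerR
  rw [lintegral_indicator measurableSet_ball]
  exact (kerR_integrable n hn R).lintegral_lt_top.ne

lemma kerR_translate (n : ℕ) (R : ℝ) (U : Set (En n)) (y : En n) :
    ∫⁻ x in U, kerR n R (x - y) = ∫⁻ z in (fun z => z + y) ⁻¹' U, kerR n R z := by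
  have := (measurePreserving_sub_right (volume : Measure (En n)) y).setLIntegral_comp_preimage_emb
    (MeasurableEquiv.subRight y).measurableEmbedding (kerR n R) ((fun z => z + y) ⁻¹' U)
  rw [← this, ← Set.preimage_comp]
  congr 2
  ext x
  simp

lemma potSup_ne_top (n : ℕ) (hn : 3 ≤ n) (R : ℝ) (U : Set (En n)) : potSup n R U ≠ ⊤ := by
  refine ne_top_of_le_ne_top (kerR_lintegral_ne_top n hn R) (iSup_le fun y => ?_)
  rw [kerR_translate]
  exact setLIntegral_le_lintegral _ _

lemma potSup_small (n : ℕ) (hn : 3 ≤ n) (R : ℝ) (ε : ENNReal) (hε : ε ≠ 0) :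
    ∃ δ > (0 : ℝ), ∀ U : Set (En n), volume U < ENNReal.ofReal δ → potSup n R U ≤ ε := by
  obtain ⟨δ, hδ, h⟩ := exists_pos_setLIntegral_lt_of_measure_lt (kerR_lintegral_ne_top n hn R) hε
  have h1 : min δ 1 ≠ ⊤ := ne_top_of_le_ne_top ENNReal.one_ne_top (min_le_right _ _)
  refine ⟨(min δ 1).toReal, ENNReal.toReal_pos (by simp [hδ.ne']) h1, fun U hU => ?_⟩
  rw [ENNReal.ofReal_toReal h1] at hU
  refine iSup_le fun y => ?_
  rw [kerR_translate]
  refine (h _ ?_).le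
  rw [measure_preimage_add_right]
  exact hU.trans_le (min_le_left _ _)

/-- Pointwise bound. -/
lemma ptwise {n : ℕ} {C₀ g a b r : ℝ} (ha : 0 ≤ a) (hb : 0 ≤ b) (hr : 0 < r) (hab : b ≤ a + r)
    (hg : g ≤ C₀ * r ^ ((2 : ℝ) - n) * min 1 (a * b / r ^ 2)) :
    g ≤ 2 * |C₀| * a * r ^ ((1 : ℝ) - n) := by
  have hm : min 1 (a * b / r ^ 2) ≤ 2 * a / r := by
    rcases le_total r a with h | h
    · refine (min_le_left _ _).trans ?_
      rw [le_div_iff₀ hr]; linarith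
    · refine (min_le_right _ _).trans ?_
      rw [div_le_div_iff₀ (by positivity) hr]
      nlinarith [mul_nonneg (mul_nonneg ha hr.le) (by linarith : 0 ≤ 2 * r - b)]
  have hm0 : 0 ≤ min 1 (a * b / r ^ 2) := le_min zero_le_one (by positivity)
  have hp : r ^ ((2 : ℝ) - n) = r ^ ((1 : ℝ) - n) * r := by
    rw [← Real.rpow_add_one hr.ne']; congr 1; ring
  have hq : 0 ≤ r ^ ((2 : ℝ) - n) := by positivity
  calc g ≤ C₀ * r ^ ((2 : ℝ) - n) * min 1 (a * b / r ^ 2) := hg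
    _ ≤ |C₀| * r ^ ((2 : ℝ) - n) * (2 * a / r) := by
        gcongr
        exact le_abs_self _
    _ = 2 * |C₀| * a * r ^ ((1 : ℝ) - n) := by
        rw [hp]; field_simp

/-- **Proposition (Green's function integral estimate).**
Let `Ω ⊂ ℝⁿ` (`n ≥ 3`) be a smooth bounded open set and `(G_α)` functions on `Ω × Ω` off the
diagonal satisfying `0 ≤ G_α(y,x) ≤ C₀ |y−x|^{2−n} min{1, d(y,∂Ω)d(x,∂Ω)/|y−x|²}`.
Then for every open `U ⊆ Ω` there is a constant `C(U)`, tending to `0` as `|U| → 0`, with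
`∫_U G_α(y,x) dx ≤ C(U) d(y,∂Ω)` for all `y ∈ Ω` and all `α`. -/
theorem statement8
    (n : ℕ) (hn : 3 ≤ n)
    (Ω : Set (En n)) (hΩo : IsOpen Ω) (hΩb : Bornology.IsBounded Ω)
    (G : ℕ → En n → En n → ℝ) (C₀ : ℝ)
    (hG : ∀ α, ∀ y ∈ Ω, ∀ x ∈ Ω, x ≠ y →
      0 ≤ G α y x ∧
      G α y x ≤ C₀ * ‖y - x‖ ^ ((2 : ℝ) - n) *
        min 1 (infDist y (frontier Ω) * infDist x (frontier Ω) / ‖y - x‖ ^ 2)) :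
    ∃ C : Set (En n) → ℝ,
      (∀ U : Set (En n), IsOpen U → U ⊆ Ω → ∀ α, ∀ y ∈ Ω,
        (∫ x in U, G α y x) ≤ C U * infDist y (frontier Ω)) ∧
      (∀ ε > (0 : ℝ), ∃ δ > (0 : ℝ), ∀ U : Set (En n), IsOpen U → U ⊆ Ω →
        volume U < ENNReal.ofReal δ → C U < ε) := by
  obtain ⟨R, hR⟩ : ∃ R : ℝ, ∀ x ∈ Ω, ∀ y ∈ Ω, x - y ∈ ball (0 : En n) R := by
    obtain ⟨M, hM⟩ := hΩb.exists_norm_le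
    refine ⟨M + M + 1, fun x hx y hy => ?_⟩
    rw [mem_ball_zero_iff]
    have := norm_sub_le x y
    linarith [hM x hx, hM y hy]
  refine ⟨fun U => 2 * |C₀| * (potSup n R U).toReal, ?_, ?_⟩
  · intro U hUo hU α y hy
    set d := infDist y (frontier Ω) with hd
    have hd0 : 0 ≤ d := infDist_nonneg
    have hne : ∀ᵐ x ∂(volume.restrict U), x ≠ y := by
      haveI : Nonempty (Fin n) := ⟨⟨0, by omega⟩⟩
      exact ae_restrict_of_ae (Measure.ae_ne volume y)
    have hmem : ∀ᵐ x ∂(volume.restrict U), x ∈ U := ae_restrict_mem hUo.measurableSet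
    have hmeas : Measurable fun x : En n => ‖x - y‖ ^ ((1 : ℝ) - n) :=
      ((measurable_id.sub_const y).norm.pow_const _)
    have hlin : ∫⁻ x in U, ENNReal.ofReal (‖x - y‖ ^ ((1 : ℝ) - n)) ≤ potSup n R U := by
      refine le_trans (le_of_eq ?_) (le_iSup _ y)
      refine setLIntegral_congr_fun hUo.measurableSet fun x hx => ?_
      simp only [kerR]
      rw [Set.indicator_of_mem (hR x (hU hx) y hy)]
    have hnn : ∀ᵐ x ∂(volume.restrict U), 0 ≤ ‖x - y‖ ^ ((1 : ℝ) - n) :=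
      Eventually.of_forall fun x => by positivity
    have hint : IntegrableOn (fun x : En n => ‖x - y‖ ^ ((1 : ℝ) - n)) U := by
      refine ⟨hmeas.aestronglyMeasurable, ?_⟩
      rw [hasFiniteIntegral_iff_ofReal hnn]
      exact hlin.trans_lt (potSup_ne_top n hn R U).lt_top
    calc (∫ x in U, G α y x) ≤ ∫ x in U, 2 * |C₀| * d * ‖x - y‖ ^ ((1 : ℝ) - n) := by
          refine integral_mono_of_nonneg ?_ (hint.const_mul _) ?_
          · filter_upwards [hne, hmem] with x h1 h2
            exact (hG α y hy x (hU h2) h1).1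
          · filter_upwards [hne, hmem] with x h1 h2
            refine ptwise hd0 infDist_nonneg (norm_pos_iff.2 (sub_ne_zero.2 h1)) ?_
              (b := infDist x (frontier Ω)) ?_
            · rw [← dist_eq_norm]; exact infDist_le_infDist_add_dist
            · rw [norm_sub_rev x y]; exact (hG α y hy x (hU h2) h1).2
      _ = 2 * |C₀| * d * ∫ x in U, ‖x - y‖ ^ ((1 : ℝ) - n) := integral_const_mul _ _
      _ ≤ 2 * |C₀| * d * (potSup n R U).toReal := by
          gcongr
          rw [integral_eq_lintegral_of_nonneg_ae hnn hmeas.aestronglyMeasurable]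
          exact ENNReal.toReal_mono (potSup_ne_top n hn R U) hlin
      _ = 2 * |C₀| * (potSup n R U).toReal * d := by ring
  · intro ε hε
    have hη : 0 < ε / (2 * |C₀| + 1) := by positivity
    obtain ⟨δ, hδ, h⟩ := potSup_small n hn R (ENNReal.ofReal (ε / (2 * |C₀| + 1)))
      (by simpa using hη)
    refine ⟨δ, hδ, fun U _ _ hv => ?_⟩
    have h1 : (potSup n R U).toReal ≤ ε / (2 * |C₀| + 1) :=
      ENNReal.toReal_le_of_le_ofReal hη.le (h U hv)
    calc 2 * |C₀| * (potSup n R U).toReal ≤ 2 * |C₀| * (ε / (2 * |C₀| + 1)) := by gcongr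
      _ < ε := by
        rw [mul_div_assoc', div_lt_iff₀ (by positivity)]
        nlinarith
end
end

section
/- Let n ≥ 3, Ω₀ := (−∞,1) × ℝ^{n−1} and, for x ∈ Ω₀, define 𝓗̃(x) := 2 n^{(n−4)/2} (n−2)^{(n−2)/2} ω_{n−1}^{−1} (x₁ − 1) ∫_{∂Ω₀} |y|^{2−n} |x−y|^{−n} dσ(y), and let D₀ = 2 n^{(n−4)/2}(n−2)^{(n−2)/2}/ω_{n−1}. Then ∂₁𝓗̃(0)/D₀ = ∫_{∂Ω₀}|y|^{2−2n}dσ(y) − n∫_{∂Ω₀}|y|^{−2n}dσ(y) = −((n−2)/2) ∫_{∂Ω₀}|y|^{2−2n}dσ(y) < 0; in particular ∂₁𝓗̃(0) < 0. -/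
open MeasureTheory Filter Topology Metric
open scoped RealInnerProductSpace

noncomputable section

open scoped ENNReal

/-- The first basis vector direction index. -/
def e0 (n : ℕ) (h : 0 < n) : Fin n := ⟨0, h⟩

/-- The half-space `Ω₀ = (−∞,1) × ℝ^{n−1}`. -/
def halfSpace (n : ℕ) (h : 0 < n) : Set (En n) := {x : En n | x (e0 n h) < 1}

/-- The hyperplane `∂Ω₀ = {1} × ℝ^{n−1}`. -/
def hyperplane (n : ℕ) (h : 0 < n) : Set (En n) := {x : En n | x (e0 n h) = 1}

/-- `ω_{n−1}`: the surface area of the unit sphere `𝕊^{n−1} ⊂ ℝⁿ`, as the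
`(n−1)`-dimensional Hausdorff measure of the unit sphere. -/
def sphereArea (n : ℕ) : ℝ := (μH[((n : ℝ) - 1)] (Metric.sphere (0 : En n) 1)).toReal

/-- The constant `D₀ = 2 n^{(n−4)/2} (n−2)^{(n−2)/2} / ω_{n−1}`. -/
def D0const (n : ℕ) : ℝ :=
  2 * (n : ℝ) ^ (((n : ℝ) - 4) / 2) * ((n : ℝ) - 2) ^ (((n : ℝ) - 2) / 2) / sphereArea n

/-- The harmonic extension `𝓗̃(x) = D₀ (x₁ − 1) ∫_{∂Ω₀} |y|^{2−n} |x−y|^{−n} dσ(y)`,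
where `dσ` is the `(n−1)`-dimensional (Hausdorff) surface measure on `∂Ω₀`. -/
def HT (n : ℕ) (h : 0 < n) (x : En n) : ℝ :=
  D0const n * (x (e0 n h) - 1) *
    ∫ y in hyperplane n h, ‖y‖ ^ ((2 : ℝ) - n) * ‖x - y‖ ^ (-(n : ℝ)) ∂(μH[((n : ℝ) - 1)])

lemma orth_finrank {n : ℕ} (hn : 3 ≤ n) (v : En n) (hv : v ≠ 0) :
    Module.finrank ℝ (Submodule.span ℝ {v})ᗮ = n - 1 := by
  have : Fact (Module.finrank ℝ (En n) = (n - 1) + 1) := ⟨by simp; omega⟩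
  exact Submodule.finrank_orthogonal_span_singleton hv

lemma orth_haar {n : ℕ} (hn : 3 ≤ n) (v : En n) (hv : v ≠ 0) :
    (μH[((n : ℝ) - 1)] : Measure (Submodule.span ℝ {v})ᗮ).IsAddHaarMeasure := by
  have h1 := isAddHaarMeasure_hausdorffMeasure (E := (Submodule.span ℝ {v})ᗮ)
  rw [orth_finrank hn v hv, Nat.cast_sub (by omega)] at h1
  simpa using h1

lemma sphere_pos {n : ℕ} (hn : 3 ≤ n) (v : En n) (hv : ‖v‖ = 1) :
    0 < μH[((n : ℝ) - 1)] (Metric.sphere (0 : En n) 1) := by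
  have hv0 : v ≠ 0 := by rintro rfl; simp at hv
  have := orth_haar hn v hv0
  have hn1 : (0:ℝ) ≤ (n:ℝ) - 1 := by
    have : (3:ℝ) ≤ n := by exact_mod_cast hn
    linarith
  set P := (Submodule.span ℝ {v})ᗮ.orthogonalProjectionOnto with hP
  have hL : LipschitzWith 1 P := (Submodule.span ℝ {v})ᗮ.lipschitzWith_orthogonalProjectionOnto
  have h1 := hL.hausdorffMeasure_image_le hn1 (Metric.sphere (0 : En n) 1)
  simp only [ENNReal.coe_one, ENNReal.one_rpow, one_mul] at h1
  refine lt_of_lt_of_le ?_ h1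
  refine lt_of_lt_of_le (measure_ball_pos μH[((n : ℝ) - 1)] (0 : (Submodule.span ℝ {v})ᗮ) one_pos) ?_
  apply measure_mono
  intro z hz
  have hz1 : ‖z‖ < 1 := by simpa using hz
  have horth : ⟪(z : En n), v⟫ = 0 := Submodule.mem_orthogonal_singleton_iff_inner_left.mp z.2
  refine ⟨(z : En n) + Real.sqrt (1 - ‖z‖^2) • v, ?_, ?_⟩
  · have h2 : ‖(z : En n) + Real.sqrt (1 - ‖z‖^2) • v‖ ^ 2 = 1 := by
      rw [norm_add_sq_real, inner_smul_right, horth, norm_smul, hv, mul_one, Real.norm_eq_abs, sq_abs,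
        Real.sq_sqrt (by nlinarith [norm_nonneg z])]
      simp
    rw [mem_sphere_zero_iff_norm]
    exact (pow_eq_one_iff_of_nonneg (norm_nonneg _) two_ne_zero).mp h2
  · have hv2 : P v = 0 := by
      apply Submodule.orthogonalProjectionOnto_apply_of_mem_orthogonal
      rw [Submodule.orthogonal_orthogonal]
      exact Submodule.mem_span_singleton_self v
    rw [map_add, map_smul, hv2, smul_zero, add_zero]
    exact Submodule.orthogonalProjectionOnto_mem_subspace_eq_self z

lemma sphere_fin {n : ℕ} (hn : 3 ≤ n) :
    μH[((n : ℝ) - 1)] (Metric.sphere (0 : En n) 1) < ⊤ := by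
  have hn1 : (0:ℝ) ≤ (n:ℝ) - 1 := by
    have : (3:ℝ) ≤ n := by exact_mod_cast hn
    linarith
  refine (isCompact_sphere (0 : En n) 1).measure_lt_top_of_nhdsWithin ?_
  intro v hv
  have hv : ‖v‖ = 1 := by simpa using hv
  have hv0 : v ≠ 0 := by rintro rfl; simp at hv
  have := orth_haar hn v hv0
  have horth (z : (Submodule.span ℝ {v})ᗮ) : ⟪v, (z : En n)⟫ = 0 :=
    Submodule.mem_orthogonal_singleton_iff_inner_right.mp z.2
  let g : (Submodule.span ℝ {v})ᗮ → En n := fun z => (‖v + (z : En n)‖)⁻¹ • (v + (z : En n))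
  have hne (z : (Submodule.span ℝ {v})ᗮ) : v + (z : En n) ≠ 0 := by
    intro h0
    have : ⟪v, v + (z : En n)⟫ = 1 := by
      rw [inner_add_right, horth, real_inner_self_eq_norm_sq, hv]; norm_num
    rw [h0] at this
    simp at this
  have hg : ContDiff ℝ 1 g := by
    have h1 : ContDiff ℝ 1 (fun z : (Submodule.span ℝ {v})ᗮ => v + (z : En n)) :=
      contDiff_const.add ((Submodule.span ℝ {v})ᗮ.subtypeL).contDiff
    exact ((h1.norm ℝ hne).inv (fun z => norm_ne_zero_iff.mpr (hne z))).smul h1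
  obtain ⟨K, hK⟩ := hg.contDiffOn.exists_lipschitzOnWith one_ne_zero
    (convex_closedBall (0 : (Submodule.span ℝ {v})ᗮ) 1) (isCompact_closedBall _ _)
  have hfin : μH[((n : ℝ) - 1)] (g '' closedBall 0 1) < ⊤ := by
    refine (hK.hausdorffMeasure_image_le hn1).trans_lt ?_
    exact ENNReal.mul_lt_top (ENNReal.rpow_lt_top_of_nonneg hn1 ENNReal.coe_ne_top)
      (isCompact_closedBall _ _).measure_lt_top
  refine ⟨_, ?_, hfin⟩
  have hc : ContinuousAt (fun x : En n => ‖(⟪v, x⟫)⁻¹ • x - v‖) v := by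
    have : ⟪v, v⟫ ≠ 0 := by rw [real_inner_self_eq_norm_sq, hv]; norm_num
    fun_prop (disch := assumption)
  have hc2 : ContinuousAt (fun x : En n => ⟪v, x⟫) v := by fun_prop
  have e1 : ∀ᶠ x in 𝓝 v, ‖(⟪v, x⟫)⁻¹ • x - v‖ < 1 := by
    apply hc.eventually_lt continuousAt_const
    simp [real_inner_self_eq_norm_sq, hv]
  have e2 : ∀ᶠ x in 𝓝 v, 0 < ⟪v, x⟫ := by
    apply continuousAt_const.eventually_lt hc2
    simp [real_inner_self_eq_norm_sq, hv]
  filter_upwards [mem_nhdsWithin_of_mem_nhds e1, mem_nhdsWithin_of_mem_nhds e2, self_mem_nhdsWithin]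
    with x h1 h2 h3
  have h3 : ‖x‖ = 1 := by simpa using h3
  refine ⟨⟨(⟪v, x⟫)⁻¹ • x - v, ?_⟩, ?_, ?_⟩
  · rw [Submodule.mem_orthogonal_singleton_iff_inner_right, inner_sub_right, inner_smul_right,
      real_inner_self_eq_norm_sq, hv]
    field_simp
    norm_num
  · rw [mem_closedBall_zero_iff]; exact h1.le
  · simp only [g, add_sub_cancel, norm_smul, h3, mul_one, norm_inv, Real.norm_eq_abs, abs_of_pos h2,
      inv_inv, smul_smul]
    rw [mul_inv_cancel₀ h2.ne', one_smul]

lemma radial {F : Type*} [NormedAddCommGroup F] [NormedSpace ℝ F] [FiniteDimensional ℝ F]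
    [MeasurableSpace F] [BorelSpace F] [Nontrivial F] (ν : Measure F) [ν.IsAddHaarMeasure]
    (k : ℕ) (hF : Module.finrank ℝ F = k + 1)
    (hi1 : Integrable (fun z : F => ((1 + ‖z‖^2)^(k+1))⁻¹) ν)
    (hi2 : Integrable (fun z : F => ((1 + ‖z‖^2)^(k+2))⁻¹) ν) :
    ∫ z, ((1 + ‖z‖^2)^(k+2))⁻¹ ∂ν = (∫ z, ((1 + ‖z‖^2)^(k+1))⁻¹ ∂ν) / 2 := by
  let f : ℝ → ℝ := fun r => 2 * ((1 + r^2)^(k+2))⁻¹ - ((1 + r^2)^(k+1))⁻¹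
  have hint : Integrable (fun z : F => f ‖z‖) ν := (hi2.const_mul 2).sub hi1
  have h1 : ∫ z, f ‖z‖ ∂ν = 2 * (∫ z, ((1 + ‖z‖^2)^(k+2))⁻¹ ∂ν) - (∫ z, ((1 + ‖z‖^2)^(k+1))⁻¹ ∂ν) := by
    simp only [f]
    rw [integral_sub (hi2.const_mul 2) hi1, integral_const_mul]
  have h2 : ∫ z, f ‖z‖ ∂ν = 0 := by
    rw [integral_fun_norm_addHaar ν f, hF]
    have hio := (integrable_fun_norm_addHaar ν (f := f)).mp hint
    rw [hF] at hio
    simp only [Nat.add_sub_cancel] at hio ⊢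
    have := integral_Ioi_of_hasDerivAt_of_tendsto' (a := 0) (m := 0)
      (f := fun r : ℝ => r^(k+1) * ((1 + r^2)^(k+1))⁻¹ / (k+1)) (f' := fun r => r^k • f r)
      (fun x _ => by
        have hp : (1 + x^2) ≠ 0 := by positivity
        have hd : HasDerivAt (fun r : ℝ => (1 + r^2)) (2 * x) x := by
          simpa using (hasDerivAt_pow 2 x).const_add 1
        have hd2 := (hd.pow (k+1)).inv (pow_ne_zero _ hp)
        have := ((hasDerivAt_pow (k+1) x).mul hd2).div_const ((k:ℝ)+1)
        convert! this using 1
        simp only [f, smul_eq_mul, Nat.add_sub_cancel, Pi.pow_apply, Pi.inv_apply]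
        push_cast
        have : (k:ℝ) + 1 ≠ 0 := by positivity
        field_simp
        ring) hio ?_
    · rw [this]; simp
    · have ht : Tendsto (fun r : ℝ => r⁻¹ / (k+1)) atTop (𝓝 0) := by
        simpa using tendsto_inv_atTop_zero.div_const ((k:ℝ)+1)
      refine squeeze_zero' ?_ ?_ ht
      · filter_upwards [eventually_ge_atTop 0] with r hr
        positivity
      · filter_upwards [eventually_ge_atTop 1] with r hr
        have hr0 : 0 < r := by linarith
        gcongr
        rw [← inv_pow, ← mul_pow]
        have hq : r * (1 + r^2)⁻¹ ≤ r⁻¹ := by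
          rw [← div_eq_mul_inv, div_le_iff₀ (by positivity)]
          field_simp
          linarith
        have hq1 : r * (1 + r^2)⁻¹ ≤ 1 := hq.trans (inv_le_one_of_one_le₀ hr)
        calc (r * (1 + r^2)⁻¹)^(k+1) ≤ (r * (1 + r^2)⁻¹)^1 :=
              pow_le_pow_of_le_one (by positivity) hq1 (by omega)
          _ ≤ r⁻¹ := by simpa using hq
  linarith

lemma eb_norm (n : ℕ) (h : 0 < n) : ‖(EuclideanSpace.single (e0 n h) 1 : En n)‖ = 1 := by simp

lemma hyper_mem {n : ℕ} (h : 0 < n) {y : En n} (hy : y ∈ hyperplane n h) :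
    ⟪y, EuclideanSpace.single (e0 n h) (1:ℝ)⟫ = 1 := by
  have : y (e0 n h) = 1 := hy
  simp [EuclideanSpace.inner_single_right, this]

lemma hyper_norm {n : ℕ} (h : 0 < n) {y : En n} (hy : y ∈ hyperplane n h) : 1 ≤ ‖y‖ := by
  have h1 := real_inner_le_norm y (EuclideanSpace.single (e0 n h) (1:ℝ))
  rwa [hyper_mem h hy, eb_norm, mul_one] at h1

lemma hyper_meas {n : ℕ} (h : 0 < n) : MeasurableSet (hyperplane n h) := by
  have : IsClosed (hyperplane n h) := isClosed_eq (by fun_prop) continuous_const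
  exact this.measurableSet

lemma hyper_facts {n : ℕ} (hn : 3 ≤ n) (h : 0 < n) :
    IntegrableOn (fun y : En n => ‖y‖ ^ ((2 : ℝ) - 2 * n)) (hyperplane n h) μH[((n : ℝ) - 1)] ∧
    (∫ y in hyperplane n h, ‖y‖ ^ (-(2 * (n : ℝ))) ∂(μH[((n : ℝ) - 1)])) =
      (∫ y in hyperplane n h, ‖y‖ ^ ((2 : ℝ) - 2 * n) ∂(μH[((n : ℝ) - 1)])) / 2 ∧
    0 < ∫ y in hyperplane n h, ‖y‖ ^ ((2 : ℝ) - 2 * n) ∂(μH[((n : ℝ) - 1)]) := by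
  set e : En n := EuclideanSpace.single (e0 n h) 1 with he
  have hen : ‖e‖ = 1 := eb_norm n h
  have he0 : e ≠ 0 := by intro h0; rw [h0] at hen; simp at hen
  have hn3 : (3:ℝ) ≤ n := by exact_mod_cast hn
  have hn1 : (0:ℝ) ≤ (n:ℝ) - 1 := by linarith
  have haar := orth_haar hn e he0
  have hrank := orth_finrank hn e he0
  have hnt : Nontrivial (Submodule.span ℝ {e})ᗮ :=
    Module.nontrivial_of_finrank_pos (R := ℝ) (by omega)
  let ι : (Submodule.span ℝ {e})ᗮ → En n := fun z => e + (z : En n)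
  have hiso : Isometry ι := Isometry.of_dist_eq (fun a b => by simp [ι, Subtype.dist_eq])
  have hemb := hiso.isClosedEmbedding.measurableEmbedding
  have horth (z : (Submodule.span ℝ {e})ᗮ) : ⟪e, (z : En n)⟫ = 0 :=
    Submodule.mem_orthogonal_singleton_iff_inner_right.mp z.2
  have hrange : Set.range ι = hyperplane n h := by
    ext y
    constructor
    · rintro ⟨z, rfl⟩
      have hz := horth z
      simp only [he, EuclideanSpace.inner_single_left] at hz
      have hz2 : (z : En n) (e0 n h) = 0 := by simpa using hz
      change (e + (z : En n)) (e0 n h) = 1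
      simp [he, hz2]
    · intro hy
      refine ⟨⟨y - e, ?_⟩, by simp [ι]⟩
      rw [Submodule.mem_orthogonal_singleton_iff_inner_right, inner_sub_right, real_inner_comm,
        hyper_mem h hy, real_inner_self_eq_norm_sq, hen]
      norm_num
  have hmap : Measure.map ι μH[((n : ℝ) - 1)] = μH[((n : ℝ) - 1)].restrict (hyperplane n h) := by
    rw [hiso.map_hausdorffMeasure (Or.inl hn1), hrange]
  have hnorm (z : (Submodule.span ℝ {e})ᗮ) : ‖ι z‖ ^ 2 = 1 + ‖z‖ ^ 2 := by
    simp only [ι]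
    rw [norm_add_sq_real, horth, hen]
    simp
  have hpow (z : (Submodule.span ℝ {e})ᗮ) (k : ℕ) (s : ℝ) (hs : s = -(2 * (k:ℝ))) :
      ‖ι z‖ ^ s = ((1 + ‖z‖^2)^k)⁻¹ := by
    rw [hs, Real.rpow_neg (norm_nonneg _), ← hnorm, ← pow_mul, ← Real.rpow_natCast]
    push_cast
    rfl
  obtain ⟨k, rfl⟩ : ∃ k, n = k + 2 := ⟨n - 2, by omega⟩
  have hp1 (z : (Submodule.span ℝ {e})ᗮ) :
      ‖ι z‖ ^ ((2:ℝ) - 2 * ((k+2:ℕ):ℝ)) = ((1 + ‖z‖^2)^(k+1))⁻¹ :=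
    hpow z (k+1) _ (by push_cast; ring)
  have hp2 (z : (Submodule.span ℝ {e})ᗮ) :
      ‖ι z‖ ^ (-(2 * ((k+2:ℕ):ℝ))) = ((1 + ‖z‖^2)^(k+2))⁻¹ :=
    hpow z (k+2) _ rfl
  have hrank2 : Module.finrank ℝ (Submodule.span ℝ {e})ᗮ = k + 1 := hrank
  have hint (j : ℕ) (hj : k + 1 ≤ j) : Integrable
      (fun z : (Submodule.span ℝ {e})ᗮ => ((1 + ‖z‖^2)^j)⁻¹) μH[((k+2:ℕ):ℝ) - 1] := by
    have := integrable_rpow_neg_one_add_norm_sq (E := (Submodule.span ℝ {e})ᗮ)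
      (μ := μH[((k+2:ℕ):ℝ) - 1]) (r := 2 * (j:ℝ)) (by
        rw [hrank2]
        have : ((k + 1 : ℕ):ℝ) ≤ j := by exact_mod_cast hj
        push_cast at *
        nlinarith)
    refine this.congr (Eventually.of_forall fun z => ?_)
    have h0 : (0:ℝ) ≤ 1 + ‖z‖^2 := by positivity
    have h1 : -(2 * (j:ℝ)) / 2 = -(j:ℝ) := by ring
    simp only [h1, Real.rpow_neg h0, Real.rpow_natCast]
  have hi1 := hint (k+1) le_rfl
  have hi2 := hint (k+2) (by omega)
  rw [IntegrableOn, ← hmap, hemb.integrable_map_iff, hemb.integral_map, hemb.integral_map]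
  simp only [Function.comp_def, hp1, hp2]
  refine ⟨hi1, radial _ k hrank2 hi1 hi2, ?_⟩
  rw [integral_pos_iff_support_of_nonneg (fun z => by positivity) hi1]
  have : Function.support (fun z : (Submodule.span ℝ {e})ᗮ => ((1 + ‖z‖^2)^(k+1))⁻¹) = Set.univ := by
    ext z
    simp only [Function.mem_support, Set.mem_univ, iff_true]
    positivity
  rw [this]
  exact isOpen_univ.measure_pos _ Set.univ_nonempty

/-- the derivative in `x` of the kernel -/
def kerD (n : ℕ) (x y : En n) : En n →L[ℝ] ℝ :=
  (‖y‖ ^ ((2:ℝ) - n)) • ((-(n:ℝ)/2 * (‖x - y‖^2) ^ (-(n:ℝ)/2 - 1)) • ((2:ℝ) • innerSL ℝ (x - y)))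

lemma kerD_has {n : ℕ} (x y : En n) (hxy : x - y ≠ 0) :
    HasFDerivAt (fun x : En n => ‖y‖ ^ ((2 : ℝ) - n) * ‖x - y‖ ^ (-(n : ℝ))) (kerD n x y) x := by
  have h1 : HasFDerivAt (fun x : En n => ‖x - y‖^2) ((2:ℝ) • innerSL ℝ (x - y)) x := by
    have := (hasStrictFDerivAt_norm_sq (x - y)).hasFDerivAt.comp x ((hasFDerivAt_id x).sub_const y)
    simpa [Function.comp_def, ofNat_smul_eq_nsmul] using this
  have h2 := (h1.rpow_const (p := -(n:ℝ)/2) (Or.inl (by positivity))).const_mul (‖y‖ ^ ((2:ℝ) - n))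
  have h3 : (fun x : En n => ‖y‖ ^ ((2 : ℝ) - n) * ‖x - y‖ ^ (-(n : ℝ))) =
      (fun x : En n => ‖y‖ ^ ((2 : ℝ) - n) * (‖x - y‖^2) ^ (-(n : ℝ)/2)) := by
    ext x
    rw [← Real.rpow_natCast_mul (norm_nonneg _)]
    congr 2
    push_cast
    ring
  rw [h3]
  exact h2

lemma kerD_bound {n : ℕ} (x y : En n) (hy : 1 ≤ ‖y‖) (hx : ‖x‖ < 1/2) :
    ‖kerD n x y‖ ≤ (n * 2 ^ ((n:ℝ)+1)) * ‖y‖ ^ ((2:ℝ) - 2 * n) := by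
  have hd : ‖y‖ / 2 ≤ ‖x - y‖ := by
    have := norm_sub_norm_le y x
    rw [norm_sub_rev] at this
    linarith
  have hy0 : 0 < ‖y‖ := by linarith
  have hd0 : 0 < ‖x - y‖ := by linarith
  have hE : ‖kerD n x y‖ = ‖y‖ ^ ((2:ℝ) - n) * (n * ‖x - y‖ ^ (-(n:ℝ) - 1)) := by
    simp only [kerD, norm_smul, innerSL_apply_norm, Real.norm_eq_abs]
    rw [abs_of_nonneg (Real.rpow_nonneg (norm_nonneg y) _), abs_mul,
      abs_of_nonneg (Real.rpow_nonneg (sq_nonneg ‖x - y‖) _),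
      ← Real.rpow_natCast_mul (norm_nonneg _)]
    have h1 : |(-(n:ℝ)/2)| = n / 2 := by
      rw [neg_div, abs_neg, abs_of_nonneg (by positivity)]
    have h2 : ‖x - y‖ ^ (((2:ℕ):ℝ) * (-(n:ℝ)/2 - 1)) * ‖x - y‖ = ‖x - y‖ ^ (-(n:ℝ) - 1) := by
      rw [← Real.rpow_add_one hd0.ne']
      congr 1
      push_cast
      ring
    rw [h1, ← h2, abs_of_pos (by norm_num : (0:ℝ) < 2)]
    ring
  have h3 : ‖x - y‖ ^ (-(n:ℝ) - 1) ≤ 2 ^ ((n:ℝ)+1) * ‖y‖ ^ (-(n:ℝ) - 1) := by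
    calc ‖x - y‖ ^ (-(n:ℝ) - 1) ≤ (‖y‖ / 2) ^ (-(n:ℝ) - 1) :=
          Real.rpow_le_rpow_of_nonpos (by positivity) hd (by linarith [(Nat.cast_nonneg n : (0:ℝ) ≤ n)])
      _ = 2 ^ ((n:ℝ)+1) * ‖y‖ ^ (-(n:ℝ) - 1) := by
          rw [Real.div_rpow (norm_nonneg _) (by norm_num), div_eq_mul_inv,
            ← Real.rpow_neg (by norm_num : (0:ℝ) ≤ 2), mul_comm]
          congr 2
          ring
  have h4 : ‖y‖ ^ ((2:ℝ) - n) * ‖y‖ ^ (-(n:ℝ) - 1) ≤ ‖y‖ ^ ((2:ℝ) - 2 * n) := by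
    rw [← Real.rpow_add hy0]
    exact Real.rpow_le_rpow_of_exponent_le hy (by linarith)
  rw [hE]
  calc ‖y‖ ^ ((2:ℝ) - n) * (n * ‖x - y‖ ^ (-(n:ℝ) - 1))
      ≤ ‖y‖ ^ ((2:ℝ) - n) * (n * (2 ^ ((n:ℝ)+1) * ‖y‖ ^ (-(n:ℝ) - 1))) := by gcongr
    _ = (n * 2 ^ ((n:ℝ)+1)) * (‖y‖ ^ ((2:ℝ) - n) * ‖y‖ ^ (-(n:ℝ) - 1)) := by ring
    _ ≤ _ := by gcongr

lemma kerD_meas {n : ℕ} (μ : Measure (En n)) : AEStronglyMeasurable (kerD n 0) μ := by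
  unfold kerD
  have h1 : Measurable (fun y : En n => ‖y‖ ^ ((2:ℝ) - n)) := by fun_prop
  have h2 : Measurable (fun y : En n => -(n:ℝ)/2 * (‖0 - y‖^2) ^ (-(n:ℝ)/2 - 1)) := by fun_prop
  have h3 : Continuous (fun y : En n => (2:ℝ) • innerSL ℝ (0 - y)) := by fun_prop
  exact h1.aestronglyMeasurable.smul (h2.aestronglyMeasurable.smul h3.aestronglyMeasurable)

lemma HT_deriv {n : ℕ} (hn : 3 ≤ n) (h : 0 < n) :
    fderiv ℝ (HT n h) 0 (EuclideanSpace.single (e0 n h) 1) =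
      D0const n * ((∫ y in hyperplane n h, ‖y‖ ^ ((2 : ℝ) - 2 * n) ∂(μH[((n : ℝ) - 1)])) -
        n * ∫ y in hyperplane n h, ‖y‖ ^ (-(2 * (n : ℝ))) ∂(μH[((n : ℝ) - 1)])) := by
  obtain ⟨hint, -, -⟩ := hyper_facts hn h
  have hbint := hint.const_mul (n * 2 ^ ((n:ℝ)+1))
  have hball : ball (0 : En n) (1/2) ∈ 𝓝 (0 : En n) := ball_mem_nhds _ (by norm_num)
  have hae : ∀ᵐ y ∂(μH[((n : ℝ) - 1)].restrict (hyperplane n h)), y ∈ hyperplane n h :=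
    ae_restrict_mem (hyper_meas h)
  have hker0 : ∀ᵐ y ∂(μH[((n : ℝ) - 1)].restrict (hyperplane n h)),
      ‖y‖ ^ ((2 : ℝ) - 2 * n) = ‖y‖ ^ ((2 : ℝ) - n) * ‖(0 : En n) - y‖ ^ (-(n : ℝ)) := by
    filter_upwards [hae] with y hy
    have hy0 : 0 < ‖y‖ := lt_of_lt_of_le one_pos (hyper_norm h hy)
    rw [zero_sub, norm_neg, ← Real.rpow_add hy0]
    congr 1
    ring
  have hbd : ∀ᵐ y ∂(μH[((n : ℝ) - 1)].restrict (hyperplane n h)), ∀ x ∈ ball (0 : En n) (1/2),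
      ‖kerD n x y‖ ≤ (n * 2 ^ ((n:ℝ)+1)) * ‖y‖ ^ ((2:ℝ) - 2 * n) := by
    filter_upwards [hae] with y hy x hx
    exact kerD_bound x y (hyper_norm h hy) (by simpa using hx)
  have hG := hasFDerivAt_integral_of_dominated_of_fderiv_le (𝕜 := ℝ)
    (μ := μH[((n : ℝ) - 1)].restrict (hyperplane n h))
    (F := fun x y : En n => ‖y‖ ^ ((2 : ℝ) - n) * ‖x - y‖ ^ (-(n : ℝ))) (F' := kerD n) hball
    (Eventually.of_forall fun x => by
      apply Measurable.aestronglyMeasurable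
      fun_prop)
    (hint.congr hker0) (kerD_meas _) hbd hbint (by
      filter_upwards [hae] with y hy x hx
      apply kerD_has
      intro h0
      rw [sub_eq_zero] at h0
      have h1 := hyper_norm h hy
      have h2 : ‖x‖ < 1/2 := by simpa using hx
      rw [h0] at h2
      linarith)
  have hkint : Integrable (kerD n 0) (μH[((n : ℝ) - 1)].restrict (hyperplane n h)) := by
    refine Integrable.mono' hbint (kerD_meas _) ?_
    filter_upwards [hbd] with y hy
    exact hy 0 (by simp)
  have hc : HasFDerivAt (fun x : En n => D0const n * (x (e0 n h) - 1))
      (D0const n • (EuclideanSpace.proj (e0 n h) : En n →L[ℝ] ℝ)) 0 :=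
    ((EuclideanSpace.proj (e0 n h) : En n →L[ℝ] ℝ).hasFDerivAt.sub_const 1).const_mul _
  have hH := hc.mul hG
  have hval : (∫ y in hyperplane n h, kerD n 0 y ∂μH[((n : ℝ) - 1)])
      (EuclideanSpace.single (e0 n h) 1) =
      n * ∫ y in hyperplane n h, ‖y‖ ^ (-(2 * (n : ℝ))) ∂(μH[((n : ℝ) - 1)]) := by
    rw [ContinuousLinearMap.integral_apply hkint, ← integral_const_mul]
    apply integral_congr_ae
    filter_upwards [hae] with y hy
    have hy0 : 0 < ‖y‖ := lt_of_lt_of_le one_pos (hyper_norm h hy)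
    simp only [kerD, zero_sub, norm_neg, ContinuousLinearMap.smul_apply, innerSL_apply_apply,
      inner_neg_left, hyper_mem h hy, smul_eq_mul]
    rw [← Real.rpow_natCast_mul hy0.le]
    have : ‖y‖ ^ (-(2 * (n : ℝ))) =
        ‖y‖ ^ ((2:ℝ) - n) * ‖y‖ ^ (((2:ℕ):ℝ) * (-(n:ℝ)/2 - 1)) := by
      rw [← Real.rpow_add hy0]
      congr 1
      push_cast
      ring
    rw [this]
    ring
  have hH2 : HasFDerivAt (HT n h) _ 0 := hH
  rw [hH2.fderiv, integral_congr_ae hker0]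
  simp only [ContinuousLinearMap.add_apply, ContinuousLinearMap.smul_apply, hval, smul_eq_mul]
  simp
  ring

/-- **Lemma (sign of ∂₁𝓗̃(0)).**
For `n ≥ 3` and `𝓗̃` as above, `∂₁𝓗̃(0)/D₀ = ∫_{∂Ω₀}|y|^{2−2n}dσ − n ∫_{∂Ω₀}|y|^{−2n}dσ
= −((n−2)/2) ∫_{∂Ω₀}|y|^{2−2n}dσ < 0`, and in particular `∂₁𝓗̃(0) < 0`. -/
theorem statement16 (n : ℕ) (hn : 3 ≤ n) (h : 0 < n) :
    fderiv ℝ (HT n h) 0 (EuclideanSpace.single (e0 n h) 1) =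
      D0const n * ((∫ y in hyperplane n h, ‖y‖ ^ ((2 : ℝ) - 2 * n) ∂(μH[((n : ℝ) - 1)])) -
        n * ∫ y in hyperplane n h, ‖y‖ ^ (-(2 * (n : ℝ))) ∂(μH[((n : ℝ) - 1)])) ∧
    (∫ y in hyperplane n h, ‖y‖ ^ ((2 : ℝ) - 2 * n) ∂(μH[((n : ℝ) - 1)])) -
        n * (∫ y in hyperplane n h, ‖y‖ ^ (-(2 * (n : ℝ))) ∂(μH[((n : ℝ) - 1)])) =
      -(((n : ℝ) - 2) / 2) *
        ∫ y in hyperplane n h, ‖y‖ ^ ((2 : ℝ) - 2 * n) ∂(μH[((n : ℝ) - 1)]) ∧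
    fderiv ℝ (HT n h) 0 (EuclideanSpace.single (e0 n h) 1) < 0 := by
  have hd := HT_deriv hn h
  obtain ⟨-, hB, hA⟩ := hyper_facts hn h
  have hn3 : (3:ℝ) ≤ n := by exact_mod_cast hn
  have hD : 0 < D0const n := by
    have hs : 0 < sphereArea n :=
      ENNReal.toReal_pos (sphere_pos hn _ (eb_norm n h)).ne' (sphere_fin hn).ne
    have h2 : (0:ℝ) < (n:ℝ) - 2 := by linarith
    have h0 : (0:ℝ) < n := by linarith
    unfold D0const
    positivity
  have hid : (∫ y in hyperplane n h, ‖y‖ ^ ((2 : ℝ) - 2 * n) ∂(μH[((n : ℝ) - 1)])) -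
        n * (∫ y in hyperplane n h, ‖y‖ ^ (-(2 * (n : ℝ))) ∂(μH[((n : ℝ) - 1)])) =
      -(((n : ℝ) - 2) / 2) *
        ∫ y in hyperplane n h, ‖y‖ ^ ((2 : ℝ) - 2 * n) ∂(μH[((n : ℝ) - 1)]) := by
    rw [hB]
    ring
  refine ⟨hd, hid, ?_⟩
  rw [hd, hid]
  have h2 : (0:ℝ) < ((n:ℝ) - 2) / 2 := by linarith
  have := mul_pos hD (mul_pos h2 hA)
  linarith
end
end
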